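/- Let X = X_{a,b} be the Bourgain–Delbaen space and Q : ℓ∞^* → X^* the restriction map. Then every weak*-limit point x^* of the sequence (Q e_k^*)_{k∈ℕ} in X^* is the sum of a norm-absolutely convergent series x^* = Σ_{j=1}^∞ c_j Q((I − P_{m_j})^* e_{r_j}^*) for some reals c_j with |c_j| ≤ a^{j−1}, some m_j ∈ ℕ ∪ {0} (with P₀ = 0) and some r_j ∈ ℕ. Consequently every such limit point belongs to the closed linear span of {Q e_j^* : j ∈ ℕ}. -/

import Mathlib

open MeasureTheory Set Ordinal Filter
open scoped Classical

/-- `ℓ∞ = ℓ∞(ℕ)`. -/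
noncomputable abbrev linf : Type := lp (fun _ : ℕ => ℝ) ⊤

/-- The `k`-th coordinate functional `e_k^*` on `ℓ∞`. -/
noncomputable def coordFn (k : ℕ) : linf →L[ℝ] ℝ :=
  LinearMap.mkContinuous
    { toFun := fun x => x k
      map_add' := fun _ _ => rfl
      map_smul' := fun _ _ => rfl }
    1 (fun x => by
      rw [one_mul]
      exact lp.norm_apply_le_norm (E := fun _ : ℕ => ℝ) ENNReal.top_ne_zero x k)

/-- The `k`-th coordinate vector `e_k` of `ℓ∞`. -/
noncomputable def ek (k : ℕ) : linf := lp.single ⊤ k (1 : ℝ)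

/-- `E_n = span{e_k : 1 ≤ k ≤ d n}`. -/
noncomputable def Esub (d : ℕ → ℕ) (n : ℕ) : Submodule ℝ linf :=
  Submodule.span ℝ {x : linf | ∃ k : ℕ, 1 ≤ k ∧ k ≤ d n ∧ x = ek k}

/-- All the data of the Bourgain–Delbaen construction: the constants `a`, `b`, `λ`, the
dimensions `d n`, the enumeration `φ` of tuples `(σ',i,m,σ'',j)`, the coordinate projections
`π_m`, the embeddings `i_{m,n}` and the limit projections `P_m`, together with their defining
properties. -/
structure BDSetup where
  a : ℝ
  b : ℝ
  lam : ℝ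
  hb : 0 < b
  hba : b < a
  ha : a < 1
  hlam : 1 < lam
  hineq : a + 2 * b * lam < lam
  /-- the dimensions -/
  d : ℕ → ℕ
  hd1 : d 1 = 1
  hd2 : d 2 = 2
  /-- the enumeration of the tuples `(σ', i, m, σ'', j)` -/
  φ : ℕ → ℤ × ℕ × ℕ × ℤ × ℕ
  hφ : ∀ n : ℕ, 2 ≤ n → Set.BijOn φ {k : ℕ | d n < k ∧ k ≤ d (n + 1)}
      {q : ℤ × ℕ × ℕ × ℤ × ℕ | (q.1 = 1 ∨ q.1 = -1) ∧ (q.2.2.2.1 = 1 ∨ q.2.2.2.1 = -1) ∧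
        1 ≤ q.2.2.1 ∧ q.2.2.1 < n ∧ 1 ≤ q.2.1 ∧ q.2.1 ≤ d q.2.2.1 ∧
        1 ≤ q.2.2.2.2 ∧ q.2.2.2.2 ≤ d n}
  /-- the coordinate projections `π_m` -/
  pi : ℕ → (linf →L[ℝ] linf)
  hpi : ∀ (m : ℕ) (x : linf) (k : ℕ), pi m x k = if 1 ≤ k ∧ k ≤ d m then x k else 0
  /-- the embeddings `i_{m,n}` -/
  iMap : ℕ → ℕ → (linf →L[ℝ] linf)
  hi12 : ∀ x : linf, x ∈ Esub d 1 → iMap 1 2 x = x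
  histep : ∀ n : ℕ, 2 ≤ n → ∀ x : linf, x ∈ Esub d n →
    iMap n (n + 1) x = x + ∑ k ∈ Finset.Ioc (d n) (d (n + 1)),
      (a * ((φ k).1 : ℝ) * x (φ k).2.1 +
        b * (((φ k).2.2.2.1 : ℤ) : ℝ) *
          ((x - iMap (φ k).2.2.1 n (pi (φ k).2.2.1 x)) (φ k).2.2.2.2)) • ek k
  hicomp : ∀ m n : ℕ, 1 ≤ m → m < n → ∀ x : linf, x ∈ Esub d m →
    iMap m (n + 1) x = iMap n (n + 1) (iMap m n x)
  hinorm : ∀ m n : ℕ, 1 ≤ m → m < n → ∀ x : linf, x ∈ Esub d m → ‖iMap m n x‖ ≤ lam * ‖x‖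
  /-- the coordinatewise limit projections `P_m` -/
  P : ℕ → (linf →L[ℝ] linf)
  hP0 : P 0 = 0
  hPlim : ∀ m : ℕ, 1 ≤ m → ∀ (x : linf) (k : ℕ),
    Filter.Tendsto (fun n => (iMap m n (pi m x)) k) Filter.atTop (nhds (P m x k))
  hPproj : ∀ m : ℕ, (P m).comp (P m) = P m
  hPnorm : ∀ m : ℕ, ‖P m‖ ≤ lam

/-- The Bourgain–Delbaen space `X = X_{a,b}`, the closed linear span of `⋃ m, P_m(E_m)`. -/
noncomputable def Xsub (S : BDSetup) : Submodule ℝ linf :=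
  (Submodule.span ℝ (⋃ m ∈ {m : ℕ | 1 ≤ m}, (S.P m) '' (Esub S.d m))).topologicalClosure

/-- The restriction (quotient) map `Q : ℓ∞^* → X^*`. -/
noncomputable def QMap (S : BDSetup) (f : linf →L[ℝ] ℝ) : (Xsub S) →L[ℝ] ℝ :=
  f.comp (Xsub S).subtypeL

/-- The images `Q e_k^*` of the coordinate functionals in `X^*`. -/
noncomputable def Qe (S : BDSetup) (k : ℕ) : (Xsub S) →L[ℝ] ℝ := QMap S (coordFn k)

namespace BDSetup

variable (S : BDSetup)

lemma ek_apply (k i : ℕ) : (ek k : linf) i = if i = k then 1 else 0 := by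
  unfold ek
  rw [lp.single_apply]
  by_cases h : i = k
  · subst h; simp
  · simp [h]

lemma linf_sum_apply (s : Finset ℕ) (f : ℕ → ℝ) (i : ℕ) :
    (∑ k ∈ s, f k • ek k : linf) i = if i ∈ s then f i else 0 := by
  have h : (∑ k ∈ s, f k • ek k : linf) i = ∑ k ∈ s, f k * (ek k : linf) i := by
    have := map_sum (coordFn i) (fun k => f k • ek k) s
    exact this
  rw [h]
  simp [ek_apply]

lemma mem_E_iff (n : ℕ) (x : linf) :
    x ∈ Esub S.d n ↔ ∀ k, ¬ (1 ≤ k ∧ k ≤ S.d n) → x k = 0 := by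
  constructor
  · intro hx
    unfold Esub at hx
    induction hx using Submodule.span_induction with
    | mem x hx =>
      obtain ⟨k, h1, h2, rfl⟩ := hx
      intro i hi
      rw [ek_apply, if_neg]
      rintro rfl
      exact hi ⟨h1, h2⟩
    | zero => intro k _; rfl
    | add x y _ _ hx hy =>
      intro k hk
      have : (x + y : linf) k = x k + y k := rfl
      rw [this, hx k hk, hy k hk, add_zero]
    | smul c x _ hx =>
      intro k hk
      have : (c • x : linf) k = c * x k := rfl
      rw [this, hx k hk, mul_zero]
  · intro h
    have : x = ∑ k ∈ Finset.Icc 1 (S.d n), x k • ek k := by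
      ext i
      rw [linf_sum_apply]
      split_ifs with hi
      · rfl
      · exact h i (by simpa using hi)
    rw [this]
    refine Submodule.sum_mem _ fun k hk => Submodule.smul_mem _ _ (Submodule.subset_span ?_)
    rw [Finset.mem_Icc] at hk
    exact ⟨k, hk.1, hk.2, rfl⟩

lemma pi_mem (n : ℕ) (x : linf) : S.pi n x ∈ Esub S.d n := by
  rw [mem_E_iff]
  intro k hk
  rw [S.hpi, if_neg hk]

lemma pi_congr (n : ℕ) (x y : linf) (h : ∀ k, 1 ≤ k → k ≤ S.d n → x k = y k) :
    S.pi n x = S.pi n y := by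
  ext k
  rw [S.hpi, S.hpi]
  split_ifs with hk
  · exact h k hk.1 hk.2
  · rfl

lemma pi_of_mem (n : ℕ) (x : linf) (hx : x ∈ Esub S.d n) : S.pi n x = x := by
  ext k
  rw [S.hpi]
  split_ifs with hk
  · rfl
  · exact ((S.mem_E_iff n x).1 hx k hk).symm

lemma d_step (n : ℕ) (hn : 1 ≤ n) : 1 ≤ S.d n ∧ S.d n < S.d (n + 1) := by
  induction n, hn using Nat.le_induction with
  | base => rw [S.hd1, S.hd2]; omega
  | succ n hn ih =>
    have h1 : 1 ≤ S.d (n + 1) := by omega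
    refine ⟨h1, ?_⟩
    obtain ⟨k, hk, -⟩ := (S.hφ (n + 1) (by omega)).surjOn
      (show ((1, 1, 1, 1, 1) : ℤ × ℕ × ℕ × ℤ × ℕ) ∈ _ from
        ⟨Or.inl rfl, Or.inl rfl, le_rfl, by show 1 < n + 1; omega, le_rfl, by
          show 1 ≤ S.d 1; rw [S.hd1], le_rfl, h1⟩)
    exact lt_of_lt_of_le hk.1 hk.2

lemma d_mono {m n : ℕ} (hm : 1 ≤ m) (h : m ≤ n) : S.d m ≤ S.d n := by
  induction n, h using Nat.le_induction with
  | base => exact le_rfl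
  | succ n hn ih => exact ih.trans (S.d_step n (by omega)).2.le

lemma d_ge (n : ℕ) (hn : 1 ≤ n) : n ≤ S.d n := by
  induction n, hn using Nat.le_induction with
  | base => rw [S.hd1]
  | succ n hn ih => have := (S.d_step n hn).2; omega

/-- one step embeddings -/
lemma step_apply_low (n : ℕ) (hn : 1 ≤ n) (x : linf) (hx : x ∈ Esub S.d n) (k : ℕ)
    (hk : k ≤ S.d n) : S.iMap n (n + 1) x k = x k := by
  rcases Nat.eq_or_lt_of_le hn with h | h
  · subst h
    rw [S.hi12 x hx]
  · rw [S.histep n h x hx]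
    rw [lp.coeFn_add, Pi.add_apply, linf_sum_apply, if_neg, add_zero]
    simp only [Finset.mem_Ioc]; omega

lemma step_apply_new (n : ℕ) (hn : 2 ≤ n) (x : linf) (hx : x ∈ Esub S.d n) (k : ℕ)
    (hk : S.d n < k) (hk' : k ≤ S.d (n + 1)) :
    S.iMap n (n + 1) x k = S.a * ((S.φ k).1 : ℝ) * x (S.φ k).2.1 +
        S.b * (((S.φ k).2.2.2.1 : ℤ) : ℝ) *
          ((x - S.iMap (S.φ k).2.2.1 n (S.pi (S.φ k).2.2.1 x)) (S.φ k).2.2.2.2) := by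
  rw [S.histep n hn x hx]
  rw [lp.coeFn_add, Pi.add_apply, linf_sum_apply, if_pos (Finset.mem_Ioc.2 ⟨hk, hk'⟩)]
  rw [(S.mem_E_iff n x).1 hx k (by omega), zero_add]

lemma step_mem (n : ℕ) (hn : 1 ≤ n) (x : linf) (hx : x ∈ Esub S.d n) :
    S.iMap n (n + 1) x ∈ Esub S.d (n + 1) := by
  have hd := (S.d_step n hn).2
  rw [mem_E_iff]
  intro k hk
  have h0 : x k = 0 := (S.mem_E_iff n x).1 hx k (by omega)
  rcases Nat.eq_or_lt_of_le hn with h | h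
  · subst h
    rw [S.hi12 x hx]; exact h0
  · rw [S.histep n h x hx]
    rw [lp.coeFn_add, Pi.add_apply, linf_sum_apply, if_neg, add_zero, h0]
    simp only [Finset.mem_Ioc]; omega

lemma iMap_mem (m n : ℕ) (hm : 1 ≤ m) (hmn : m < n) (x : linf) (hx : x ∈ Esub S.d m) :
    S.iMap m n x ∈ Esub S.d n := by
  induction n, (show m + 1 ≤ n from hmn) using Nat.le_induction with
  | base => exact S.step_mem m hm x hx
  | succ n hn ih =>
    rw [S.hicomp m n hm (by omega) x hx]
    exact S.step_mem n (by omega) _ (ih (by omega))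

lemma iMap_stable (m n N : ℕ) (hm : 1 ≤ m) (hmn : m < n) (hN : n ≤ N) (x : linf)
    (hx : x ∈ Esub S.d m) (k : ℕ) (hk : k ≤ S.d n) :
    S.iMap m N x k = S.iMap m n x k := by
  induction N, hN using Nat.le_induction with
  | base => rfl
  | succ N hN ih =>
    rw [S.hicomp m N hm (by omega) x hx, S.step_apply_low N (by omega) _
      (S.iMap_mem m N hm (by omega) x hx) k (hk.trans (S.d_mono (by omega) hN)), ih]

lemma iMap_comp (m n N : ℕ) (hm : 1 ≤ m) (hmn : m < n) (hN : n < N) (x : linf)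
    (hx : x ∈ Esub S.d m) :
    S.iMap m N x = S.iMap n N (S.iMap m n x) := by
  induction N, (show n + 1 ≤ N from hN) using Nat.le_induction with
  | base => exact S.hicomp m n hm hmn x hx
  | succ N hN' ih =>
    rw [S.hicomp m N hm (by omega) x hx, ih (by omega),
      ← S.hicomp n N (by omega) (by omega) _ (S.iMap_mem m n hm hmn x hx)]

lemma P_apply (m n : ℕ) (hm : 1 ≤ m) (hmn : m < n) (x : linf) (k : ℕ) (hk : k ≤ S.d n) :
    S.P m x k = S.iMap m n (S.pi m x) k := by
  refine tendsto_nhds_unique (S.hPlim m hm x k) (tendsto_const_nhds.congr' ?_)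
  filter_upwards [eventually_ge_atTop n] with N hN
  exact (S.iMap_stable m n N hm hmn hN _ (S.pi_mem m x) k hk).symm

lemma P_apply_low (m : ℕ) (hm : 1 ≤ m) (x : linf) (k : ℕ) (hk1 : 1 ≤ k) (hk : k ≤ S.d m) :
    S.P m x k = x k := by
  rw [S.P_apply m (m + 1) hm (by omega) x k (hk.trans (S.d_step m hm).2.le),
    S.step_apply_low m hm _ (S.pi_mem m x) k hk, S.hpi, if_pos ⟨hk1, hk⟩]

lemma P_congr (m : ℕ) (hm : 1 ≤ m) (x y : linf) (h : S.pi m x = S.pi m y) :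
    S.P m x = S.P m y := by
  ext k
  refine tendsto_nhds_unique (S.hPlim m hm x k) ?_
  rw [h]
  exact S.hPlim m hm y k

lemma P_pi (m : ℕ) (hm : 1 ≤ m) (x : linf) : S.P m (S.pi m x) = S.P m x :=
  S.P_congr m hm _ _ (S.pi_of_mem m _ (S.pi_mem m x))

lemma P_P_le (m n : ℕ) (h : m ≤ n) (x : linf) : S.P m (S.P n x) = S.P m x := by
  rcases Nat.eq_zero_or_pos m with rfl | hm
  · rw [S.hP0]; rfl
  · exact S.P_congr m hm _ _ (S.pi_congr m _ _ fun k h1 h2 =>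
      S.P_apply_low n (by omega) x k h1 (h2.trans (S.d_mono hm h)))

lemma P_P_ge (m n : ℕ) (h : m ≤ n) (x : linf) : S.P n (S.P m x) = S.P m x := by
  rcases Nat.eq_zero_or_pos m with rfl | hm
  · rw [S.hP0]; simp
  rcases Nat.eq_or_lt_of_le h with rfl | hlt
  · exact S.P_P_le _ _ le_rfl x
  have hpi : S.pi n (S.P m x) = S.iMap m n (S.pi m x) := by
    rw [← S.pi_of_mem n _ (S.iMap_mem m n hm hlt _ (S.pi_mem m x))]
    exact S.pi_congr n _ _ fun k _ h2 => S.P_apply m n hm hlt x k h2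
  ext k
  refine tendsto_nhds_unique (S.hPlim n (by omega) _ k) ((S.hPlim m hm x k).congr' ?_)
  filter_upwards [eventually_gt_atTop n] with N hN
  rw [hpi, S.iMap_comp m n N hm hlt hN _ (S.pi_mem m x)]

/-- (I - P_m)(I - P_n) = I - P_max -/
lemma IP_comp (m n : ℕ) (x : linf) :
    (x - S.P n x) - S.P m (x - S.P n x) = x - S.P (max n m) x := by
  rw [map_sub]
  rcases le_total m n with h | h
  · rw [S.P_P_le m n h, max_eq_left h]; simp
  · rw [S.P_P_ge n m h, max_eq_right h]; simp

lemma P_mem_X (m : ℕ) (x : linf) : S.P m x ∈ Xsub S := by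
  rcases Nat.eq_zero_or_pos m with rfl | hm
  · rw [S.hP0]; exact Submodule.zero_mem _
  · refine Submodule.le_topologicalClosure _ (Submodule.subset_span ?_)
    refine Set.mem_biUnion (show m ∈ {m : ℕ | 1 ≤ m} from hm) ?_
    exact ⟨S.pi m x, S.pi_mem m x, S.P_pi m hm x⟩

lemma P_tendsto (x : linf) (hx : x ∈ Xsub S) :
    Tendsto (fun n => ‖x - S.P n x‖) atTop (nhds 0) := by
  have hspan : ∀ y ∈ Submodule.span ℝ (⋃ m ∈ {m : ℕ | 1 ≤ m}, (S.P m) '' (Esub S.d m)),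
      ∃ N, ∀ n ≥ N, S.P n y = y := by
    intro y hy
    induction hy using Submodule.span_induction with
    | mem y hy =>
      simp only [Set.mem_iUnion] at hy
      obtain ⟨m, _, z, _, rfl⟩ := hy
      exact ⟨m, fun n hn => S.P_P_ge m n hn z⟩
    | zero => exact ⟨0, fun n _ => map_zero _⟩
    | add y z _ _ hy hz =>
      obtain ⟨N, hN⟩ := hy
      obtain ⟨M, hM⟩ := hz
      refine ⟨max N M, fun n hn => ?_⟩
      rw [map_add, hN n (le_trans (le_max_left _ _) hn), hM n (le_trans (le_max_right _ _) hn)]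
    | smul c y _ hy =>
      obtain ⟨N, hN⟩ := hy
      exact ⟨N, fun n hn => by rw [map_smul, hN n hn]⟩
  have hl := S.hlam
  rw [Metric.tendsto_atTop]
  intro ε hε
  have hδ : 0 < ε / (1 + S.lam) := by positivity
  obtain ⟨y, hy, hxy⟩ := Metric.mem_closure_iff.1 (show x ∈ closure _ from hx) _ hδ
  obtain ⟨N, hN⟩ := hspan y hy
  refine ⟨N, fun n hn => ?_⟩
  rw [dist_zero_right, norm_norm]
  have e : x - S.P n x = (x - y) - S.P n (x - y) := by
    rw [map_sub, hN n hn]; abel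
  rw [dist_eq_norm] at hxy
  rw [e]
  calc ‖(x - y) - S.P n (x - y)‖ ≤ ‖x - y‖ + ‖S.P n (x - y)‖ := norm_sub_le _ _
    _ ≤ ‖x - y‖ + S.lam * ‖x - y‖ := by
        gcongr; exact (S.P n).le_of_opNorm_le (S.hPnorm n) _
    _ = (1 + S.lam) * ‖x - y‖ := by ring
    _ < (1 + S.lam) * (ε / (1 + S.lam)) := by gcongr
    _ = ε := by field_simp

/-- The key identity. -/
lemma P_key (n : ℕ) (hn : 2 ≤ n) (k : ℕ) (hk : S.d n < k) (hk' : k ≤ S.d (n + 1)) (x : linf) :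
    S.P n x k = S.a * ((S.φ k).1 : ℝ) * x (S.φ k).2.1 +
        S.b * (((S.φ k).2.2.2.1 : ℤ) : ℝ) *
          ((x - S.P (S.φ k).2.2.1 x) (S.φ k).2.2.2.2) := by
  obtain ⟨_, _, hm1, hm2, hi1, hi2, hj1, hj2⟩ := (S.hφ n hn).mapsTo ⟨hk, hk'⟩
  have hdm := S.d_mono hm1 hm2.le
  have hpp : S.pi (S.φ k).2.2.1 (S.pi n x) = S.pi (S.φ k).2.2.1 x :=
    S.pi_congr _ _ _ fun i h1 h2 => by rw [S.hpi, if_pos ⟨h1, h2.trans hdm⟩]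
  rw [S.P_apply n (n + 1) (by omega) (by omega) x k hk',
    S.step_apply_new n hn _ (S.pi_mem n x) k hk hk', hpp, lp.coeFn_sub, lp.coeFn_sub,
    Pi.sub_apply, Pi.sub_apply, S.hpi, S.hpi, if_pos ⟨hi1, hi2.trans hdm⟩, if_pos ⟨hj1, hj2⟩,
    S.P_apply _ n hm1 hm2 x _ hj2]

/-- the operator I - P_m on X -/
noncomputable def IP (m : ℕ) : Xsub S →L[ℝ] Xsub S :=
  ((ContinuousLinearMap.id ℝ linf - S.P m).comp (Xsub S).subtypeL).codRestrict (Xsub S)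
    (fun x => Submodule.sub_mem _ x.2 (S.P_mem_X m _))

lemma IP_coe (m : ℕ) (x : Xsub S) : ((S.IP m x : Xsub S) : linf) = (x : linf) - S.P m x := rfl

lemma IP_IP (m n : ℕ) (x : Xsub S) : S.IP m (S.IP n x) = S.IP (max n m) x :=
  Subtype.ext (S.IP_comp m n x)

lemma IP_zero (x : Xsub S) : S.IP 0 x = x := by
  apply Subtype.ext
  rw [IP_coe, S.hP0]; simp

lemma IP_norm (m : ℕ) : ‖S.IP m‖ ≤ 1 + S.lam := by
  have hl := S.hlam
  refine ContinuousLinearMap.opNorm_le_bound _ (by positivity) fun x => ?_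
  show ‖((S.IP m x : Xsub S) : linf)‖ ≤ (1 + S.lam) * ‖(x : linf)‖
  rw [IP_coe]
  calc ‖(x : linf) - S.P m x‖ ≤ ‖(x : linf)‖ + ‖S.P m x‖ := norm_sub_le _ _
    _ ≤ ‖(x : linf)‖ + S.lam * ‖(x : linf)‖ := by
        gcongr; exact (S.P m).le_of_opNorm_le (S.hPnorm m) _
    _ = _ := by ring

lemma Qe_apply (k : ℕ) (x : Xsub S) : Qe S k x = (x : linf) k := rfl

lemma Qe_le (k : ℕ) (x : Xsub S) : |Qe S k x| ≤ ‖x‖ := by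
  rw [Qe_apply]
  exact lp.norm_apply_le_norm (E := fun _ : ℕ => ℝ) ENNReal.top_ne_zero (x : linf) k

lemma QMap_eq (r m : ℕ) :
    QMap S ((coordFn r).comp (ContinuousLinearMap.id ℝ linf - S.P m)) = (Qe S r).comp (S.IP m) :=
  rfl

/-- ultrafilter limits of the coordinate functionals -/
def IsLim (y : Xsub S →L[ℝ] ℝ) : Prop :=
  ∃ U : Ultrafilter ℕ, {k | 1 ≤ k} ∈ U ∧ ∀ x, Tendsto (fun k => Qe S k x) U (nhds (y x))

lemma IsLim.norm_le {y : Xsub S →L[ℝ] ℝ} (h : S.IsLim y) : ‖y‖ ≤ 1 := by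
  obtain ⟨U, -, hU⟩ := h
  refine ContinuousLinearMap.opNorm_le_bound _ zero_le_one fun x => ?_
  rw [one_mul]
  exact le_of_tendsto (hU x).norm (Eventually.of_forall fun k => S.Qe_le k x)

lemma exists_lim (U : Ultrafilter ℕ) :
    ∃ y : Xsub S →L[ℝ] ℝ, ∀ x, Tendsto (fun k => Qe S k x) U (nhds (y x)) := by
  have hex : ∀ x : Xsub S, ∃ l : ℝ, Tendsto (fun k => Qe S k x) U (nhds l) := by
    intro x
    obtain ⟨l, -, hl⟩ := (isCompact_Icc (a := -‖x‖) (b := ‖x‖)).ultrafilter_le_nhds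
      (U.map (fun k => Qe S k x)) (by
        rw [le_principal_iff]
        exact Filter.Eventually.of_forall (f := (U : Filter ℕ))
          fun k => abs_le.1 (S.Qe_le k x))
    exact ⟨l, hl⟩
  choose l hl using hex
  refine ⟨LinearMap.mkContinuous
    { toFun := l
      map_add' := fun x y => tendsto_nhds_unique (hl (x + y)) (by
        simpa only [map_add] using (hl x).add (hl y))
      map_smul' := fun c x => tendsto_nhds_unique (hl (c • x)) (by
        simpa only [map_smul, RingHom.id_apply] using (hl x).const_smul c) } 1 (fun x => ?_), hl⟩
  rw [one_mul]
  exact le_of_tendsto (hl x).norm (Eventually.of_forall fun k => S.Qe_le k x)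

lemma ultra_const {α : Type*} (U : Ultrafilter ℕ) (f : ℕ → α) (s : Set α) (hs : s.Finite)
    (h : ∀ᶠ k in (U : Filter ℕ), f k ∈ s) : ∃ c ∈ s, ∀ᶠ k in (U : Filter ℕ), f k = c := by
  have : (⋃ c ∈ s, {k | f k = c}) ∈ U := by
    filter_upwards [h] with k hk
    simpa using hk
  obtain ⟨c, hc, h'⟩ := (Ultrafilter.finite_biUnion_mem_iff hs).1 this
  exact ⟨c, hc, h'⟩

lemma exists_level (k : ℕ) (hk : 2 < k) :
    ∃ n, 2 ≤ n ∧ S.d n < k ∧ k ≤ S.d (n + 1) := by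
  have hex : ∃ n, k ≤ S.d (n + 2 + 1) := ⟨k, (by omega : k ≤ k + 2 + 1).trans (S.d_ge _ (by omega))⟩
  refine ⟨Nat.find hex + 2, by omega, ?_, Nat.find_spec hex⟩
  by_contra! hcon
  rcases Nat.eq_zero_or_pos (Nat.find hex) with h0 | h0
  · rw [h0, S.hd2] at hcon; omega
  · refine Nat.find_min hex (m := Nat.find hex - 1) (by omega) ?_
    rwa [show Nat.find hex - 1 + 2 + 1 = Nat.find hex + 2 by omega]

lemma abs_sign (U : Ultrafilter ℕ) (f : ℕ → ℤ)
    (h : ∀ᶠ k in (U : Filter ℕ), f k = 1 ∨ f k = -1) :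
    ∃ σ : ℤ, |(σ : ℝ)| = 1 ∧ ∀ᶠ k in (U : Filter ℕ), f k = σ := by
  obtain ⟨c, hc, h'⟩ := ultra_const U f {1, -1} (by simp) (by simpa using h)
  refine ⟨c, ?_, h'⟩
  rcases hc with rfl | hc
  · simp
  · rw [Set.mem_singleton_iff] at hc; subst hc; simp

/-- The expansion step. -/
lemma IsLim.expand {y : Xsub S →L[ℝ] ℝ} (h : S.IsLim y) :
    ∃ (t : ℝ) (r : ℕ) (c : ℝ) (m : ℕ) (y' : Xsub S →L[ℝ] ℝ),
      |t| ≤ 1 ∧ 1 ≤ r ∧ |c| ≤ S.a ∧ S.IsLim y' ∧ ∀ x, y x = t * Qe S r x + c * y' (S.IP m x) := by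
  have hb := S.hb
  have hba := S.hba
  have ha := S.ha
  have hlim := h
  obtain ⟨U, hU1, hU⟩ := h
  by_cases hfin : ∃ N, ∀ᶠ k in (U : Filter ℕ), k ≤ N
  · obtain ⟨N, hN⟩ := hfin
    obtain ⟨r, -, hr⟩ := ultra_const U id (Set.Iic N) (Set.finite_Iic N) hN
    obtain ⟨r', hr1, hr2⟩ := ((show ∀ᶠ k in (U : Filter ℕ), 1 ≤ k from hU1).and hr).exists
    obtain rfl : r' = r := hr2
    refine ⟨1, r', 0, 0, y, by simp, hr1, by simpa using (hb.trans hba).le, hlim, fun x => ?_⟩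
    rw [one_mul, zero_mul, add_zero]
    refine tendsto_nhds_unique (hU x) (tendsto_const_nhds.congr' ?_)
    filter_upwards [hr] with k hk
    rw [show k = r' from hk]
  · have hUtop : ∀ N, ∀ᶠ k in (U : Filter ℕ), N < k := by
      intro N
      by_contra hcon
      apply hfin
      refine ⟨N, ?_⟩
      have := Ultrafilter.eventually_not.2 hcon
      filter_upwards [this] with k hk
      omega
    have hlev : ∀ k, ∃ n, 2 < k → 2 ≤ n ∧ S.d n < k ∧ k ≤ S.d (n + 1) := fun k => by
      by_cases hk : 2 < k
      · obtain ⟨n, hn⟩ := S.exists_level k hk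
        exact ⟨n, fun _ => hn⟩
      · exact ⟨0, fun h => absurd h hk⟩
    choose n hn using hlev
    have hntop : Tendsto n U atTop := by
      rw [tendsto_atTop]
      intro N
      filter_upwards [hUtop 2, hUtop (S.d (N + 1))] with k hk2 hk
      by_contra! hcon
      have h1 := (hn k hk2).2.2
      have h2 := S.d_mono (m := n k + 1) (n := N + 1) (by omega) (by omega)
      omega
    have hφ : ∀ᶠ k in (U : Filter ℕ), _ :=
      (hUtop 2).mono fun k hk => (S.hφ (n k) (hn k hk).1).mapsTo (hn k hk).2
    obtain ⟨σ', hσ', hσ'U⟩ := abs_sign U (fun k => (S.φ k).1) (hφ.mono fun k hk => hk.1)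
    obtain ⟨σ'', hσ'', hσ''U⟩ := abs_sign U (fun k => (S.φ k).2.2.2.1)
      (hφ.mono fun k hk => hk.2.1)
    -- small terms
    have hsmall : ∀ (x : Xsub S) (p q : ℕ → ℕ), Tendsto p U atTop →
        Tendsto (fun k => ((x : linf) - S.P (p k) x) (q k)) U (nhds 0) := by
      intro x p q hp
      refine squeeze_zero_norm (fun k => ?_) ((S.P_tendsto x x.2).comp hp)
      exact lp.norm_apply_le_norm (E := fun _ : ℕ => ℝ) ENNReal.top_ne_zero _ (q k)
    have hform : ∀ x : Xsub S, ∀ᶠ k in (U : Filter ℕ), Qe S k x =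
        (S.a * σ' * (x : linf) (S.φ k).2.1 +
        S.b * σ'' * (((x : linf) - S.P (S.φ k).2.2.1 x) (S.φ k).2.2.2.2)) +
          ((x : linf) - S.P (n k) x) k := by
      intro x
      filter_upwards [hUtop 2, hσ'U, hσ''U] with k hk h1 h2
      have := S.P_key (n k) (hn k hk).1 k (hn k hk).2.1 (hn k hk).2.2 x
      rw [h1, h2] at this
      rw [← this, Qe_apply, lp.coeFn_sub, Pi.sub_apply]
      ring
    by_cases hm : ∃ N, ∀ᶠ k in (U : Filter ℕ), (S.φ k).2.2.1 ≤ N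
    · obtain ⟨N, hN⟩ := hm
      obtain ⟨m, -, hm⟩ := ultra_const U (fun k => (S.φ k).2.2.1) (Set.Iic N)
        (Set.finite_Iic N) hN
      obtain ⟨r, hr1, hr⟩ := ultra_const U (fun k => (S.φ k).2.1) (Set.Icc 1 (S.d m))
        (Set.finite_Icc _ _) (by
          filter_upwards [hm, hφ] with k h1 h2
          obtain ⟨_, _, _, _, h3, h4, _⟩ := h2
          rw [h1] at h4
          exact ⟨h3, h4⟩)
      obtain ⟨y', hy'⟩ := S.exists_lim (U.map (fun k => (S.φ k).2.2.2.2))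
      refine ⟨S.a * σ', r, S.b * σ'', m, y', ?_, hr1.1, ?_, ⟨_, ?_, hy'⟩, fun x => ?_⟩
      · rw [abs_mul, hσ', mul_one, abs_of_pos (by linarith)]; exact ha.le
      · rw [abs_mul, hσ'', mul_one, abs_of_pos hb]; exact hba.le
      · exact hφ.mono fun k hk => hk.2.2.2.2.2.2.1
      · refine tendsto_nhds_unique (hU x) ?_
        have h1 : Tendsto (fun k => Qe S (S.φ k).2.2.2.2 (S.IP m x)) U
            (nhds (y' (S.IP m x))) := hy' (S.IP m x)
        have h2 := ((h1.const_mul (S.b * σ'')).const_add (S.a * σ' * Qe S r x)).add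
          (hsmall x n id hntop)
        rw [add_zero] at h2
        refine h2.congr' ?_
        filter_upwards [hform x, hm, hr] with k h3 h4 h5
        rw [h3, h4, h5]
        rfl
    · have hmtop : Tendsto (fun k => (S.φ k).2.2.1) U atTop := by
        rw [tendsto_atTop]
        intro N
        by_contra hcon
        apply hm
        refine ⟨N, ?_⟩
        have := Ultrafilter.eventually_not.2 hcon
        filter_upwards [this] with k hk
        omega
      obtain ⟨y', hy'⟩ := S.exists_lim (U.map (fun k => (S.φ k).2.1))
      refine ⟨0, 1, S.a * σ', 0, y', by simp, le_rfl, ?_, ⟨_, ?_, hy'⟩, fun x => ?_⟩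
      · rw [abs_mul, hσ', mul_one, abs_of_pos (by linarith)]
      · exact hφ.mono fun k hk => hk.2.2.2.2.1
      · rw [S.IP_zero, zero_mul, zero_add]
        refine tendsto_nhds_unique (hU x) ?_
        have h1 : Tendsto (fun k => Qe S (S.φ k).2.1 x) U (nhds (y' x)) := hy' x
        have h2 := ((h1.const_mul (S.a * σ')).add
          ((hsmall x _ (fun k => (S.φ k).2.2.2.2) hmtop).const_mul (S.b * σ''))).add
          (hsmall x n id hntop)
        rw [mul_zero, add_zero, add_zero] at h2
        refine h2.congr' ?_
        filter_upwards [hform x] with k h3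
        rw [h3]
        rfl

lemma isLim_of_cluster (xstar : (Xsub S) →L[ℝ] ℝ)
    (hcluster : ∀ (s : Finset (Xsub S)) (δ : ℝ), 0 < δ →
      {k : ℕ | 1 ≤ k ∧ ∀ x ∈ s, |Qe S k x - xstar x| < δ}.Infinite) : S.IsLim xstar := by
  let G : ℕ → (Xsub S → ℝ) := fun k x => Qe S k x
  have hne : (comap G (nhds (fun x => xstar x)) ⊓ 𝓟 {k | 1 ≤ k}).NeBot := by
    rw [inf_principal_neBot_iff]
    rintro V ⟨t, ht, htV⟩
    rw [nhds_pi, Filter.mem_pi'] at ht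
    obtain ⟨I, T, hT, hsub⟩ := ht
    have hev : ∀ᶠ δ in nhdsWithin (0 : ℝ) (Set.Ioi 0), ∀ i ∈ I,
        Metric.ball (xstar i) δ ⊆ T i := by
      rw [Filter.eventually_all_finset]
      intro i _
      obtain ⟨ε, hε, hb⟩ := Metric.mem_nhds_iff.1 (hT i)
      filter_upwards [Ioo_mem_nhdsGT hε] with δ hδ
      exact (Metric.ball_subset_ball hδ.2.le).trans hb
    obtain ⟨δ, hδ, hδ0⟩ := (hev.and self_mem_nhdsWithin).exists
    obtain ⟨k, hk1, hk2⟩ := (hcluster I δ hδ0).nonempty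
    refine ⟨k, htV (hsub fun i hi => hδ i hi ?_), hk1⟩
    rw [Metric.mem_ball, Real.dist_eq]
    exact hk2 i hi
  refine ⟨Ultrafilter.of (comap G (nhds (fun x => xstar x)) ⊓ 𝓟 {k | 1 ≤ k}), ?_, fun x => ?_⟩
  · exact (Ultrafilter.of_le _) (mem_inf_of_right (mem_principal_self _))
  · have h1 : Tendsto G (Ultrafilter.of (comap G (nhds (fun x => xstar x)) ⊓ 𝓟 {k | 1 ≤ k}))
        (nhds (fun x => xstar x)) :=
      tendsto_comap.mono_left ((Ultrafilter.of_le _).trans inf_le_left)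
    exact (tendsto_pi_nhds.1 h1) x

lemma mem_span (r m : ℕ) (hr : 1 ≤ r) : (Qe S r).comp (S.IP m) ∈ Submodule.span ℝ
      {f : (Xsub S) →L[ℝ] ℝ | ∃ k : ℕ, 1 ≤ k ∧ f = Qe S k} := by
  have hQ : ∀ k, 1 ≤ k → Qe S k ∈ Submodule.span ℝ
      {f : (Xsub S) →L[ℝ] ℝ | ∃ k : ℕ, 1 ≤ k ∧ f = Qe S k} :=
    fun k hk => Submodule.subset_span ⟨k, hk, rfl⟩
  rcases Nat.eq_zero_or_pos m with rfl | hm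
  · convert hQ r hr using 1
    ext x
    simp [S.IP_zero]
  · have e : (Qe S r).comp (S.IP m) = Qe S r -
        ∑ k ∈ Finset.Icc 1 (S.d m), (S.P m (ek k) r) • Qe S k := by
      ext x
      have h1 : S.pi m x = ∑ k ∈ Finset.Icc 1 (S.d m), (x : linf) k • ek k := by
        ext i
        rw [linf_sum_apply, S.hpi]
        simp
      have h2 : S.P m x r = ∑ k ∈ Finset.Icc 1 (S.d m), (S.P m (ek k) r) * (x : linf) k := by
        rw [← S.P_pi m hm, h1]
        have := map_sum ((coordFn r).comp (S.P m)) (fun k => (x : linf) k • ek k)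
          (Finset.Icc 1 (S.d m))
        refine this.trans (Finset.sum_congr rfl fun k _ => ?_)
        rw [map_smul]
        exact mul_comm _ _
      rw [ContinuousLinearMap.comp_apply, Qe_apply, IP_coe, lp.coeFn_sub, Pi.sub_apply, h2]
      simp [Qe_apply]
    rw [e]
    refine Submodule.sub_mem _ (hQ r hr) (Submodule.sum_mem _ fun k hk =>
      Submodule.smul_mem _ _ (hQ k (Finset.mem_Icc.1 hk).1))

lemma geom_hasSum {E : Type*} [NormedAddCommGroup E] [NormedSpace ℝ E] [CompleteSpace E]
    (f g : ℕ → E) (x : E) (a K : ℝ) (ha0 : 0 ≤ a) (ha1 : a < 1)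
    (hf : ∀ j, ‖f j‖ ≤ a ^ j * K) (hg : ∀ j, ‖g j‖ ≤ a ^ j * K)
    (hx : ∀ N, x = ∑ j ∈ Finset.range N, f j + g N) :
    Summable (fun j => ‖f j‖) ∧ HasSum f x := by
  have hsg : Summable (fun j : ℕ => a ^ j * K) :=
    (summable_geometric_of_lt_one ha0 ha1).mul_right _
  have hsum : Summable (fun j : ℕ => ‖f j‖) :=
    Summable.of_nonneg_of_le (fun _ => norm_nonneg _) hf hsg
  refine ⟨hsum, (hsum.of_norm.hasSum_iff_tendsto_nat).2 ?_⟩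
  have h3 := (squeeze_zero_norm hg hsg.tendsto_atTop_zero).const_sub x
  rw [_root_.sub_zero] at h3
  exact h3.congr fun N => sub_eq_of_eq_add (hx N)

lemma term_norm (q : ℝ) (j p : ℕ) (f : Xsub S →L[ℝ] ℝ) (hq : |q| ≤ S.a ^ j) (hf : ‖f‖ ≤ 1) :
    ‖q • f.comp (S.IP p)‖ ≤ S.a ^ j * (1 + S.lam) := by
  have ha0 : 0 < S.a := S.hb.trans S.hba
  have hl := S.hlam
  refine ContinuousLinearMap.opNorm_le_bound _ (by positivity) fun x => ?_
  have h1 : |f (S.IP p x)| ≤ 1 * ‖S.IP p x‖ := f.le_of_opNorm_le hf _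
  have h2 : ‖S.IP p x‖ ≤ (1 + S.lam) * ‖x‖ := (S.IP p).le_of_opNorm_le (S.IP_norm p) _
  show |q * f (S.IP p x)| ≤ _
  rw [abs_mul, mul_assoc]
  exact mul_le_mul hq (by linarith) (abs_nonneg _) (by positivity)

lemma Qe_norm (k : ℕ) : ‖Qe S k‖ ≤ 1 :=
  ContinuousLinearMap.opNorm_le_bound _ zero_le_one fun x => by
    rw [one_mul]; exact S.Qe_le k x

lemma exists_seq (xstar : (Xsub S) →L[ℝ] ℝ) (h : S.IsLim xstar) :
    ∃ (Y : ℕ → (Xsub S →L[ℝ] ℝ)) (t c : ℕ → ℝ) (r m : ℕ → ℕ), Y 0 = xstar ∧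
      (∀ l, S.IsLim (Y l)) ∧ (∀ l, |t l| ≤ 1) ∧ (∀ l, 1 ≤ r l) ∧ (∀ l, |c l| ≤ S.a) ∧
      ∀ l x, Y l x = t l * Qe S (r l) x + c l * Y (l + 1) (S.IP (m l) x) := by
  have hex : ∀ y : {y // S.IsLim y}, ∃ (t : ℝ) (r : ℕ) (c : ℝ) (m : ℕ) (y' : {y // S.IsLim y}),
      |t| ≤ 1 ∧ 1 ≤ r ∧ |c| ≤ S.a ∧
        ∀ x, y.1 x = t * Qe S r x + c * y'.1 (S.IP m x) := by
    rintro ⟨y, hy⟩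
    obtain ⟨t, r, c, m, y', h1, h2, h3, h4, h5⟩ := IsLim.expand S hy
    exact ⟨t, r, c, m, ⟨y', h4⟩, h1, h2, h3, h5⟩
  choose t r c m nx ht hr hc hxp using hex
  obtain ⟨Y, hY0, hY⟩ : ∃ Y : ℕ → {y // S.IsLim y}, Y 0 = ⟨xstar, h⟩ ∧
      ∀ l, Y (l + 1) = nx (Y l) :=
    ⟨fun l => nx^[l] ⟨xstar, h⟩, rfl, fun l => Function.iterate_succ_apply' _ _ _⟩
  refine ⟨fun l => (Y l).1, fun l => t (Y l), fun l => c (Y l), fun l => r (Y l),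
    fun l => m (Y l), congrArg Subtype.val hY0, fun l => (Y l).2, fun l => ht _, fun l => hr _,
    fun l => hc _, fun l x => ?_⟩
  have e := hxp (Y l) x
  rw [← hY l] at e
  exact e

lemma exists_coef (c : ℕ → ℝ) (m : ℕ → ℕ) (a : ℝ) (ha : 0 ≤ a) (hc : ∀ l, |c l| ≤ a) :
    ∃ (C : ℕ → ℝ) (M : ℕ → ℕ), C 0 = 1 ∧ M 0 = 0 ∧ (∀ l, C (l + 1) = C l * c l) ∧
      (∀ l, M (l + 1) = max (M l) (m l)) ∧ ∀ l, |C l| ≤ a ^ l := by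
  refine ⟨fun l => ∏ i ∈ Finset.range l, c i,
    fun l => Nat.rec 0 (fun i q => max q (m i)) l, by simp, rfl,
    fun l => Finset.prod_range_succ _ _, fun l => rfl, fun l => ?_⟩
  rw [Finset.abs_prod]
  calc _ ≤ ∏ i ∈ Finset.range l, a :=
        Finset.prod_le_prod (fun _ _ => abs_nonneg _) (fun i _ => hc _)
    _ = _ := by simp

lemma partial_sum (Y : ℕ → (Xsub S →L[ℝ] ℝ)) (t c : ℕ → ℝ) (r m : ℕ → ℕ)
    (hxp : ∀ l x, Y l x = t l * Qe S (r l) x + c l * Y (l + 1) (S.IP (m l) x))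
    (C : ℕ → ℝ) (M : ℕ → ℕ) (hC0 : C 0 = 1) (hM0 : M 0 = 0)
    (hC : ∀ l, C (l + 1) = C l * c l) (hM : ∀ l, M (l + 1) = max (M l) (m l)) (N : ℕ) :
    Y 0 = ∑ j ∈ Finset.range N, (C j * t j) • (Qe S (r j)).comp (S.IP (M j)) +
      C N • (Y N).comp (S.IP (M N)) := by
  induction N with
  | zero =>
    rw [Finset.sum_range_zero, zero_add, hC0, hM0, one_smul]
    ext x
    exact (congrArg (Y 0) (S.IP_zero x)).symm
  | succ N ih =>
    rw [Finset.sum_range_succ, add_assoc]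
    refine ih.trans (congrArg _ ?_)
    ext x
    have e := hxp N (S.IP (M N) x)
    rw [S.IP_IP, ← hM] at e
    show C N * Y N (S.IP (M N) x) = C N * t N * Qe S (r N) (S.IP (M N) x) +
      C (N + 1) * Y (N + 1) (S.IP (M (N + 1)) x)
    rw [e, hC]
    ring

lemma main (xstar : (Xsub S) →L[ℝ] ℝ) (h : S.IsLim xstar) :
    ∃ (c : ℕ → ℝ) (ms rs : ℕ → ℕ),
      (∀ j : ℕ, |c j| ≤ S.a ^ j) ∧ (∀ j : ℕ, 1 ≤ rs j) ∧
      Summable (fun j : ℕ => ‖c j • (Qe S (rs j)).comp (S.IP (ms j))‖) ∧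
      HasSum (fun j : ℕ => c j • (Qe S (rs j)).comp (S.IP (ms j))) xstar := by
  have ha0 : 0 < S.a := S.hb.trans S.hba
  obtain ⟨Y, t, c, r, m, hY0, hY, ht, hr, hc, hxp⟩ := S.exists_seq xstar h
  obtain ⟨C, M, hC0, hM0, hC, hM, hCb⟩ := exists_coef c m S.a ha0.le hc
  have hct : ∀ j, |C j * t j| ≤ S.a ^ j := fun j => by
    rw [abs_mul]
    calc _ ≤ S.a ^ j * 1 := mul_le_mul (hCb j) (ht _) (abs_nonneg _) (by positivity)
      _ = _ := mul_one _
  have hp := S.partial_sum Y t c r m hxp C M hC0 hM0 hC hM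
  rw [hY0] at hp
  have hf := fun j => S.term_norm (C j * t j) j (M j) (Qe S (r j)) (hct j) (S.Qe_norm _)
  have hg := fun j => S.term_norm (C j) j (M j) (Y j) (hCb j) (IsLim.norm_le S (hY j))
  obtain ⟨h1, h2⟩ := geom_hasSum (E := Xsub S →L[ℝ] ℝ) _ _ xstar S.a (1 + S.lam) ha0.le S.ha
    hf hg hp
  exact ⟨fun j => C j * t j, M, r, hct, hr, h1, h2⟩

end BDSetup

/-- from the proof of Proposition 2.1: every weak*-limit point of
`(Q e_k^*)` is the sum of an absolutely convergent series
`Σ_j c_j Q((I − P_{m_j})^* e_{r_j}^*)` with `|c_j| ≤ a^{j-1}`; in particular it lies in the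
closed linear span of `{Q e_j^*}`. -/
theorem stmt_13 (S : BDSetup) (xstar : (Xsub S) →L[ℝ] ℝ)
    (hcluster : ∀ (s : Finset (Xsub S)) (δ : ℝ), 0 < δ →
      {k : ℕ | 1 ≤ k ∧ ∀ x ∈ s, |Qe S k x - xstar x| < δ}.Infinite) :
    (∃ (c : ℕ → ℝ) (ms rs : ℕ → ℕ),
      (∀ j : ℕ, |c j| ≤ S.a ^ j) ∧ (∀ j : ℕ, 1 ≤ rs j) ∧
      Summable (fun j : ℕ =>
        ‖c j • QMap S ((coordFn (rs j)).comp (ContinuousLinearMap.id ℝ linf - S.P (ms j)))‖) ∧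
      HasSum (fun j : ℕ =>
        c j • QMap S ((coordFn (rs j)).comp (ContinuousLinearMap.id ℝ linf - S.P (ms j))))
        xstar) ∧
    xstar ∈ closure ((Submodule.span ℝ
      {f : (Xsub S) →L[ℝ] ℝ | ∃ k : ℕ, 1 ≤ k ∧ f = Qe S k} :
        Submodule ℝ ((Xsub S) →L[ℝ] ℝ)) : Set ((Xsub S) →L[ℝ] ℝ)) := by
  have hlim := S.isLim_of_cluster xstar hcluster
  obtain ⟨c, ms, rs, h1, h2, h3, h4⟩ := S.main xstar hlim
  refine ⟨⟨c, ms, rs, h1, h2, h3, h4⟩, ?_⟩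
  refine mem_closure_of_tendsto h4 (Eventually.of_forall fun s => ?_)
  exact Submodule.sum_mem _ fun j _ => Submodule.smul_mem _ _ (S.mem_span (rs j) (ms j) (h2 j))
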